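/- Let d ≥ 2 be a natural number and let f : ℝ^d → ℂ be a continuous function. Assume there is a finite-dimensional ℂ-subspace V of the space of continuous functions from ℝ^d to ℂ such that: (i) f ∈ V; (ii) V is translation invariant, i.e. for every h ∈ ℝ^d and every g ∈ V the function x ↦ g(x + h) belongs to V; and (iii) V is invariant under orthogonal transformations, i.e. for every linear isometry equivalence P of ℝ^d and every g ∈ V the function x ↦ g(P x) belongs to V. Then f is an ordinary polynomial. -/

import Mathlib

/-!
Let `V` be the invariant space. Translations act on `V` by commuting operators, so every eigenvalue
of translation by `h` is `χ h` for some exponential `χ ∈ V`. Composing `χ` with orthogonal maps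
gives further exponentials in `V`, so `χ` takes only finitely many values on the sphere through
`h`; as this sphere is connected when `d ≥ 2`, `χ` is constant on it. In particular `χ` is even,
which forces `χ = 1`. Hence translations act unipotently and all iterated differences of `f` of
order `dim V` vanish. By Newton's formula and continuity `f` is then a polynomial of bounded degree
along every line, and Lagrange interpolation in one coordinate at a time makes `f` a polynomial.
-/

open Polynomial

section FrechetPolynomials

lemma fwdDiff_iter_comp {M N G : Type*} [AddCommMonoid M] [AddCommMonoid N] [AddCommGroup G]
    {φ : M → N} {a : M} {b : N} (hφ : ∀ y, φ (y + a) = φ y + b) (g : N → G) (n : ℕ) :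
    (fwdDiff a)^[n] (g ∘ φ) = (fwdDiff b)^[n] g ∘ φ := by
  induction n with
  | zero => rfl
  | succ n ih =>
    ext y
    simp only [Function.iterate_succ_apply', ih, fwdDiff, Function.comp_apply, hφ]

lemma fwdDiff_iter_eq_zero_of_le {M G : Type*} [AddCommMonoid M] [AddCommGroup G] {g : M → G}
    {h : M} {k n : ℕ} (hkn : k ≤ n) (hg : (fwdDiff h)^[k] g = 0) : (fwdDiff h)^[n] g = 0 := by
  obtain ⟨j, rfl⟩ := Nat.exists_eq_add_of_le' hkn
  rw [Function.iterate_add_apply, hg, ← fwdDiff_aux.coe_fwdDiffₗ_pow, map_zero]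

lemma exists_polynomial_eval_natCast_of_fwdDiff_iter_eq_zero {M K : Type*} [AddCommMonoid M]
    [Field K] [CharZero K] {g : M → K} {h : M} {n : ℕ} (hg : (fwdDiff h)^[n + 1] g = 0) (y : M) :
    ∃ q : K[X], q.natDegree ≤ n ∧ ∀ m : ℕ, g (y + m • h) = q.eval (m : K) := by
  refine ⟨∑ k ∈ Finset.range (n + 1), C ((fwdDiff h)^[k] g y / k.factorial) * descPochhammer K k,
    natDegree_sum_le_of_forall_le _ _ fun k hk => ?_, fun m => ?_⟩
  · exact (natDegree_C_mul_le _ _).trans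
      ((descPochhammer_natDegree K k).trans_le (Finset.mem_range_succ_iff.mp hk))
  · have hterm : ∀ k, (C ((fwdDiff h)^[k] g y / k.factorial) * descPochhammer K k).eval (m : K) =
        m.choose k • (fwdDiff h)^[k] g y := fun k => by
      have : (k.factorial : K) ≠ 0 := mod_cast k.factorial_ne_zero
      rw [eval_mul, eval_C, descPochhammer_eval_eq_descFactorial,
        Nat.descFactorial_eq_factorial_mul_choose, nsmul_eq_mul]
      push_cast
      field_simp
    rw [shift_eq_sum_fwdDiff_iter h g m y, eval_finsetSum]
    simp only [hterm]
    refine (Finset.eventually_constant_sum (fun k hk => ?_) (Nat.le_add_right (m + 1) n)).symm.trans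
      (Finset.eventually_constant_sum (fun k hk => ?_) (by omega))
    · rw [Nat.choose_eq_zero_of_lt hk, zero_nsmul]
    · rw [fwdDiff_iter_eq_zero_of_le hk hg, Pi.zero_apply, nsmul_zero]

lemma polynomial_eq_of_eval_natCast_eq {K : Type*} [Field K] [CharZero K] {p q : K[X]}
    (h : ∀ m : ℕ, p.eval (m : K) = q.eval (m : K)) : p = q :=
  eq_of_infinite_eval_eq p q <|
    (Set.infinite_range_of_injective (Nat.cast_injective (R := K))).mono <| by
      rintro _ ⟨m, rfl⟩
      exact h m

lemma exists_polynomial_eval_intCast_of_fwdDiff_iter_eq_zero {M K : Type*} [AddCommGroup M]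
    [Field K] [CharZero K] {g : M → K} {h : M} {n : ℕ} (hg : (fwdDiff h)^[n + 1] g = 0) (y : M) :
    ∃ q : K[X], q.natDegree ≤ n ∧ ∀ m : ℤ, g (y + m • h) = q.eval (m : K) := by
  obtain ⟨q, hq, hqg⟩ := exists_polynomial_eval_natCast_of_fwdDiff_iter_eq_zero hg y
  refine ⟨q, hq, fun m => ?_⟩
  obtain ⟨N, rfl | rfl⟩ := m.eq_nat_or_neg
  · simpa using hqg N
  · obtain ⟨r, -, hrg⟩ :=
      exists_polynomial_eval_natCast_of_fwdDiff_iter_eq_zero hg (y + (-N : ℤ) • h)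
    have hrq : r.comp (X + C (N : K)) = q := polynomial_eq_of_eval_natCast_eq fun m => by
      rw [eval_comp, eval_add, eval_X, eval_C, ← Nat.cast_add, ← hrg, ← hqg]
      congr 1
      simp only [neg_smul, natCast_zsmul, add_smul]
      abel
    rw [← hrq, eval_comp]
    simpa using hrg 0

theorem exists_polynomial_of_fwdDiff_iter_eq_zero {𝕜 : Type*} [RCLike 𝕜] {g : ℝ → 𝕜}
    (hg : Continuous g) {n : ℕ} (hΔ : ∀ h : ℝ, (fwdDiff h)^[n + 1] g = 0) :
    ∃ p : 𝕜[X], p.natDegree ≤ n ∧ ∀ t : ℝ, g t = p.eval (algebraMap ℝ 𝕜 t) := by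
  obtain ⟨p, hp, hpg⟩ := exists_polynomial_eval_natCast_of_fwdDiff_iter_eq_zero (hΔ 1) 0
  refine ⟨p, hp, congrFun ?_⟩
  refine Rat.isDenseEmbedding_coe_real.dense.equalizer hg
    (p.continuous.comp (algebraMapCLM ℝ 𝕜).continuous) (funext fun r => ?_)
  obtain ⟨q, -, hqg⟩ := exists_polynomial_eval_intCast_of_fwdDiff_iter_eq_zero (hΔ (r.den : ℝ)⁻¹) 0
  have hden : (r.den : ℝ) ≠ 0 := mod_cast r.den_nz
  have hqp : q.comp (C (r.den : 𝕜) * X) = p := polynomial_eq_of_eval_natCast_eq fun m => by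
    have hm : g (m : ℝ) = p.eval (m : 𝕜) := by simpa using hpg m
    rw [← hm, eval_comp, eval_mul, eval_C, eval_X,
      show (r.den * m : 𝕜) = ((r.den * m : ℤ) : 𝕜) by push_cast; rfl, ← hqg]
    congr 1
    push_cast [zsmul_eq_mul]
    field_simp
    ring
  have hr : (r.den : 𝕜) * algebraMap ℝ 𝕜 r = (r.num : 𝕜) := by
    rw [← map_natCast (algebraMap ℝ 𝕜), ← map_mul, ← map_intCast (algebraMap ℝ 𝕜)]
    exact congrArg _ (mod_cast Rat.den_mul_eq_num r)
  calc g r = g (0 + r.num • (r.den : ℝ)⁻¹) := by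
        rw [zero_add, zsmul_eq_mul, ← div_eq_mul_inv, ← Rat.cast_def]
    _ = p.eval (algebraMap ℝ 𝕜 r) := by rw [hqg, ← hr, ← hqp]; simp

lemma exists_mvPolynomial_of_dependsOn {ι K L : Type*} [DecidableEq ι] [Field K] [Infinite K]
    [Field L] [Algebra K L] (n : ℕ) (s : Finset ι) {F : (ι → K) → L} (hFs : DependsOn F s)
    (hF : ∀ x i, ∃ p : L[X], p.natDegree ≤ n ∧
      ∀ t : K, F (Function.update x i t) = p.eval (algebraMap K L t)) :
    ∃ P : MvPolynomial ι L, ∀ x, F x = MvPolynomial.eval (algebraMap K L ∘ x) P := by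
  induction s using Finset.induction_on generalizing F with
  | empty =>
    rw [Finset.coe_empty] at hFs
    exact ⟨MvPolynomial.C (F 0), fun x => by rw [MvPolynomial.eval_C, hFs.empty x 0]⟩
  | insert i s _ ih =>
    let node : ℕ ↪ K := Infinite.natEmbedding K
    let nodes := Finset.range (n + 1)
    have hslice (j : ℕ) : ∃ P : MvPolynomial ι L, ∀ x,
        F (Function.update x i (node j)) = MvPolynomial.eval (algebraMap K L ∘ x) P := by
      refine ih (fun x y hxy => hFs fun k hk => ?_) fun x k => ?_
      · obtain rfl | hki := eq_or_ne k i
        · simp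
        · simpa [hki] using hxy k (Finset.mem_of_mem_insert_of_ne hk hki)
      · obtain rfl | hki := eq_or_ne k i
        · exact ⟨C (F (Function.update x k (node j))), by simp, fun t => by simp⟩
        · obtain ⟨p, hp, hpF⟩ := hF (Function.update x i (node j)) k
          exact ⟨p, hp, fun t => by rw [← hpF, Function.update_comm hki]⟩
    choose P hP using hslice
    let ℓ : ℕ → L[X] := Lagrange.basis nodes (algebraMap K L ∘ node)
    refine ⟨∑ j ∈ nodes, P j * aeval (MvPolynomial.X i) (ℓ j), fun x => ?_⟩
    obtain ⟨p, hp, hpF⟩ := hF x i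
    have hdeg : p.degree < nodes.card := by
      rw [Finset.card_range]
      exact (degree_le_of_natDegree_le hp).trans_lt (mod_cast n.lt_succ_self)
    have hinterp : p = ∑ j ∈ nodes, C (p.eval (algebraMap K L (node j))) * ℓ j :=
      Lagrange.eq_interpolate ((algebraMap K L).injective.comp node.injective).injOn hdeg
    have hℓ (q : L[X]) : MvPolynomial.eval (algebraMap K L ∘ x) (aeval (MvPolynomial.X i) q) =
        q.eval (algebraMap K L (x i)) := by
      rw [← MvPolynomial.aeval_eq_eval, ← aeval_algHom_apply]
      simp
    calc F x = p.eval (algebraMap K L (x i)) := by rw [← hpF, Function.update_eq_self]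
      _ = ∑ j ∈ nodes, p.eval (algebraMap K L (node j)) * (ℓ j).eval (algebraMap K L (x i)) := by
        conv_lhs => rw [hinterp]
        simp only [eval_finsetSum, eval_mul, eval_C]
      _ = _ := by simp only [map_sum, map_mul, hℓ, ← hP, hpF]

theorem exists_mvPolynomial_of_separately_polynomial {ι K L : Type*} [DecidableEq ι] [Finite ι]
    [Field K] [Infinite K] [Field L] [Algebra K L] {F : (ι → K) → L} {n : ℕ}
    (hF : ∀ x i, ∃ p : L[X], p.natDegree ≤ n ∧
      ∀ t : K, F (Function.update x i t) = p.eval (algebraMap K L t)) :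
    ∃ P : MvPolynomial ι L, ∀ x, F x = MvPolynomial.eval (algebraMap K L ∘ x) P := by
  cases nonempty_fintype ι
  exact exists_mvPolynomial_of_dependsOn n Finset.univ (by simpa using dependsOn_univ F) hF

theorem exists_mvPolynomial_of_fwdDiff_iter_eq_zero {ι E 𝕜 : Type*} [Finite ι]
    [NormedAddCommGroup E] [NormedSpace ℝ E] [RCLike 𝕜] (b : Module.Basis ι ℝ E)
    {f : E → 𝕜} (hf : Continuous f) {n : ℕ} (hΔ : ∀ h : E, (fwdDiff h)^[n + 1] f = 0) :
    ∃ P : MvPolynomial ι 𝕜, ∀ x, f x = MvPolynomial.eval (algebraMap ℝ 𝕜 ∘ b.repr x) P := by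
  classical
  cases nonempty_fintype ι
  let φ := b.equivFun.symm
  have hφ : Continuous φ := LinearMap.continuous_of_finiteDimensional φ.toLinearMap
  have hφ_update (x : ι → ℝ) (i : ι) (s t : ℝ) :
      φ (Function.update x i (t + s)) = φ (Function.update x i t) + φ (Pi.single i s) := by
    rw [← map_add]
    congr 1
    ext j
    obtain rfl | hj := eq_or_ne j i <;> simp [*]
  obtain ⟨P, hP⟩ := exists_mvPolynomial_of_separately_polynomial (F := f ∘ φ) (n := n) fun x i =>
    exists_polynomial_of_fwdDiff_iter_eq_zero (g := f ∘ (φ ∘ Function.update x i))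
      (hf.comp (hφ.comp (continuous_const.update i continuous_id))) fun s => by
        rw [fwdDiff_iter_comp (φ := φ ∘ Function.update x i) (hφ_update x i s), hΔ]
        rfl
  exact ⟨P, fun x => by simpa [φ] using hP (b.equivFun x)⟩

end FrechetPolynomials

section JointEigenvectors

variable {K W : Type*} [Field K] [IsAlgClosed K] [AddCommGroup W] [Module K W]
  [FiniteDimensional K W]

lemma exists_forall_apply_eq_smul_of_commute [Nontrivial W] {ι : Type*} {T : ι → Module.End K W}
    (hT : ∀ i j, Commute (T i) (T j)) : ∃ v ≠ 0, ∃ χ : ι → K, ∀ i, T i v = χ i • v := by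
  obtain ⟨U, ⟨hU, hUT⟩, hmin⟩ := (wellFounded_lt (α := Submodule K W)).has_min
    {U | U ≠ ⊥ ∧ ∀ i, U ∈ (T i).invtSubmodule} ⟨⊤, top_ne_bot, by simp⟩
  have hscalar (i : ι) : ∃ c : K, U ≤ (T i).eigenspace c := by
    have : Nontrivial U := Submodule.nontrivial_iff_ne_bot.mpr hU
    obtain ⟨c, hc⟩ := Module.End.exists_eigenvalue ((T i).restrict (hUT i))
    obtain ⟨w, hw⟩ := hc.exists_hasEigenvector
    have hwc : (w : W) ∈ (T i).eigenspace c :=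
      Module.End.mem_eigenspace_iff.mpr (congrArg Subtype.val hw.apply_eq_smul)
    refine ⟨c, inf_eq_left.mp (eq_of_le_of_not_lt inf_le_left (hmin _ ⟨?_, fun j => ?_⟩))⟩
    · exact Submodule.ne_bot_iff _ |>.mpr ⟨w, ⟨w.2, hwc⟩, mod_cast hw.2⟩
    · exact (T j).invtSubmodule.inf_mem (hUT j)
        (Module.End.mapsTo_genEigenspace_of_comm (hT i j) c 1)
  choose χ hχ using hscalar
  obtain ⟨v, hv, hv0⟩ := U.ne_bot_iff.mp hU
  exact ⟨v, hv0, χ, fun i => Module.End.mem_eigenspace_iff.mp (hχ i hv)⟩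

lemma sub_algebraMap_pow_finrank_eq_zero {φ : Module.End K W} {c : K}
    (hφ : ∀ μ, φ.HasEigenvalue μ → μ = c) :
    (φ - algebraMap K (Module.End K W) c) ^ Module.finrank K W = 0 := by
  have htop : φ.maxGenEigenspace c = ⊤ := by
    rw [eq_top_iff, ← φ.iSup_maxGenEigenspace_eq_top]
    refine iSup_le fun μ => ?_
    by_cases hμ : φ.maxGenEigenspace μ = ⊥
    · simp [hμ]
    · have : φ.HasEigenvalue μ := Module.End.HasUnifEigenvalue.lt (k := ⊤) zero_lt_one hμ
      rw [hφ μ this]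
  rwa [Module.End.maxGenEigenspace_eq_genEigenspace_finrank, Module.End.genEigenspace_nat,
    LinearMap.ker_eq_top] at htop

end JointEigenvectors

section Translation

/-- The operator sending `g` to `x ↦ g (x + h)` on continuous functions. -/
def translation {E K : Type*} [Add E] [TopologicalSpace E] [ContinuousAdd E]
    [Semiring K] [TopologicalSpace K] [IsTopologicalSemiring K] (h : E) : Module.End K C(E, K) :=
  ContinuousMap.compCLM K K (ContinuousMap.addRight h)

variable {E K : Type*} [AddCommMonoid E] [TopologicalSpace E] [ContinuousAdd E]
  [Field K] [TopologicalSpace K] [IsTopologicalRing K] {V : Submodule K C(E, K)}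

/-- Invariance of a space of continuous functions under all translations. -/
def IsTranslationInvariant (V : Submodule K C(E, K)) : Prop :=
  ∀ h : E, ∀ g ∈ V, translation h g ∈ V

/-- Translation by `h` as an operator on a translation-invariant space. -/
def restrictTranslation (hV : IsTranslationInvariant V) (h : E) : Module.End K V :=
  (translation h).restrict (hV h)

lemma translation_apply (h : E) (g : C(E, K)) (x : E) : translation h g x = g (x + h) := rfl

lemma commute_translation (h k : E) : Commute (translation (K := K) h) (translation k) := by
  ext g x
  simp only [Module.End.mul_apply, translation_apply, add_right_comm]

lemma coe_restrictTranslation_sub_one_pow_apply (hV : IsTranslationInvariant V) {h : E} (n : ℕ)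
    (g : V) : ⇑(((restrictTranslation hV h - 1) ^ n) g : C(E, K)) = (fwdDiff h)^[n] g := by
  induction n with
  | zero => rfl
  | succ n ih =>
    rw [pow_succ', Function.iterate_succ_apply', ← ih]
    rfl

lemma exists_addChar_mem [IsAlgClosed K] [FiniteDimensional K V] (hV0 : V ≠ ⊥)
    (hV : IsTranslationInvariant V) : ∃ u ∈ V, ∃ χ : AddChar E K, ⇑u = χ := by
  have : Nontrivial V := Submodule.nontrivial_iff_ne_bot.mpr hV0
  obtain ⟨v, hv, χ, hχ⟩ := exists_forall_apply_eq_smul_of_commute fun h k =>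
    LinearMap.restrict_commute (commute_translation h k) (hV h) (hV k)
  have hvχ (h x : E) : (v : C(E, K)) (x + h) = χ h * (v : C(E, K)) x :=
    congrArg (fun w : V => (w : C(E, K)) x) (hχ h)
  have hv_eq (h : E) : (v : C(E, K)) h = χ h * (v : C(E, K)) 0 := by simpa using hvχ h 0
  have hv0 : (v : C(E, K)) 0 ≠ 0 := fun h0 =>
    hv <| Subtype.ext <| ContinuousMap.ext fun x => by simp [hv_eq x, h0]
  refine ⟨((v : C(E, K)) 0)⁻¹ • v, V.smul_mem _ v.2, ⟨χ, ?_, fun h k => ?_⟩, funext fun x => ?_⟩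
  · exact mul_right_cancel₀ hv0 (by rw [← hv_eq, one_mul])
  · exact mul_right_cancel₀ hv0 (by rw [← hv_eq, hvχ, hv_eq, mul_left_comm, mul_assoc])
  · change _ * (v : C(E, K)) x = χ x
    rw [hv_eq x, mul_left_comm, inv_mul_cancel₀ hv0, mul_one]

lemma exists_addChar_mem_of_hasEigenvalue [IsAlgClosed K] [FiniteDimensional K V]
    (hV : IsTranslationInvariant V) {h : E} {μ : K}
    (hμ : (restrictTranslation hV h).HasEigenvalue μ) :
    ∃ u ∈ V, ∃ χ : AddChar E K, ⇑u = χ ∧ χ h = μ := by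
  let U := V ⊓ (translation h).eigenspace μ
  have hU0 : U ≠ ⊥ := by
    obtain ⟨w, hw⟩ := hμ.exists_hasEigenvector
    exact U.ne_bot_iff.mpr ⟨w, ⟨w.2, Module.End.mem_eigenspace_iff.mpr
      (congrArg Subtype.val hw.apply_eq_smul)⟩, by simpa using hw.2⟩
  have hU : IsTranslationInvariant U := fun k g hg =>
    ⟨hV k g hg.1, Module.End.mapsTo_genEigenspace_of_comm (commute_translation h k) μ 1 hg.2⟩
  have : FiniteDimensional K U := Submodule.finiteDimensional_inf_left V _
  obtain ⟨u, hu, χ, huχ⟩ := exists_addChar_mem hU0 hU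
  refine ⟨u, hu.1, χ, huχ, ?_⟩
  have hu0 : u (0 + h) = μ * u 0 :=
    congrArg (fun w : C(E, K) => w 0) (Module.End.mem_eigenspace_iff.mp hu.2)
  simpa [huχ] using hu0

lemma hasEigenvalue_of_addChar_mem (hV : IsTranslationInvariant V) {h : E} {u : C(E, K)}
    (hu : u ∈ V) {χ : AddChar E K} (huχ : ⇑u = χ) :
    (restrictTranslation hV h).HasEigenvalue (χ h) := by
  refine Module.End.hasEigenvalue_of_hasEigenvector (x := ⟨u, hu⟩)
    ⟨Module.End.mem_eigenspace_iff.mpr (Subtype.ext (ContinuousMap.ext fun x => ?_)), fun hu0 => ?_⟩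
  · change u (x + h) = χ h * u x
    rw [huχ, χ.map_add_eq_mul, mul_comm]
  · have : u 0 = 0 := congrArg (fun w : V => (w : C(E, K)) 0) hu0
    simp [huχ] at this

end Translation

lemma addChar_add_self_eq_one_of_even {G R : Type*} [AddGroup G] [Monoid R] {χ : AddChar G R}
    (hχ : ∀ x, χ (-x) = χ x) (x : G) : χ (x + x) = 1 := by
  rw [χ.map_add_eq_mul]
  nth_rw 2 [← hχ x]
  rw [← χ.map_add_eq_mul, add_neg_cancel, χ.map_zero_eq_one]

section SphereTransitive

variable {E K : Type*} [NormedAddCommGroup E] [NormedSpace ℝ E] [Field K] [TopologicalSpace K]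
  [IsTopologicalRing K] {V : Submodule K C(E, K)}

/-- Any two vectors of equal norm are related by a continuous linear map that preserves `V` under
composition. For an inner product space this holds when `V` is invariant under reflections, but also
under any group of linear isometries acting transitively on spheres, such as `SO(d)` for `d ≥ 2`. -/
def HasSphereTransitiveSymmetries (V : Submodule K C(E, K)) : Prop :=
  ∀ x y : E, ‖x‖ = ‖y‖ → ∃ P : E →L[ℝ] E, P x = y ∧ ∀ g ∈ V, g.comp (P : C(E, E)) ∈ V

lemma addChar_eq_of_norm_eq [T1Space K] [FiniteDimensional K V] (hE : 1 < Module.rank ℝ E)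
    (htrans : IsTranslationInvariant V) (hrot : HasSphereTransitiveSymmetries V)
    {u : C(E, K)} (hu : u ∈ V) {χ : AddChar E K} (huχ : ⇑u = χ) {x y : E} (hxy : ‖x‖ = ‖y‖) :
    χ x = χ y := by
  have hsub : u '' Metric.sphere 0 ‖x‖ ⊆
      {μ | (restrictTranslation htrans x).HasEigenvalue μ} := by
    rintro _ ⟨z, hz, rfl⟩
    obtain ⟨P, rfl, hP⟩ := hrot x z (by simpa using hz.symm)
    have := hasEigenvalue_of_addChar_mem htrans (h := x) (hP u hu)
      (χ := χ.compAddMonoidHom (P : E →+ E)) (by ext; simp [huχ])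
    rw [huχ]
    exact this
  have hfinite : (u '' Metric.sphere 0 ‖x‖).Finite :=
    (Module.End.finite_hasEigenvalue _).subset hsub
  have hconn : IsPreconnected (u '' Metric.sphere 0 ‖x‖) :=
    (isPreconnected_sphere hE 0 ‖x‖).image u u.continuous.continuousOn
  have hconst : (u '' Metric.sphere 0 ‖x‖).Subsingleton := Set.not_nontrivial_iff.mp fun h =>
    hconn.infinite_of_nontrivial h hfinite
  rw [← huχ]
  exact hconst ⟨x, by simp, rfl⟩ ⟨y, by simp [hxy], rfl⟩

lemma hasEigenvalue_translation_eq_one [IsAlgClosed K] [T1Space K] [FiniteDimensional K V]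
    (hE : 1 < Module.rank ℝ E) (htrans : IsTranslationInvariant V)
    (hrot : HasSphereTransitiveSymmetries V)
    {h : E} {μ : K} (hμ : (restrictTranslation htrans h).HasEigenvalue μ) : μ = 1 := by
  obtain ⟨u, hu, χ, huχ, rfl⟩ := exists_addChar_mem_of_hasEigenvalue htrans hμ
  have heven (x : E) : χ (-x) = χ x := addChar_eq_of_norm_eq hE htrans hrot hu huχ (norm_neg x)
  have := addChar_add_self_eq_one_of_even heven ((2⁻¹ : ℝ) • h)
  rwa [← add_smul, ← two_mul, mul_inv_cancel₀ two_ne_zero, one_smul] at this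

theorem fwdDiff_iter_finrank_eq_zero [IsAlgClosed K] [T1Space K] [FiniteDimensional K V]
    (hE : 1 < Module.rank ℝ E) (htrans : IsTranslationInvariant V)
    (hrot : HasSphereTransitiveSymmetries V)
    {f : C(E, K)} (hf : f ∈ V) (h : E) : (fwdDiff h)^[Module.finrank K V] f = 0 := by
  have hnil : (restrictTranslation htrans h - 1) ^ Module.finrank K V = 0 := by
    simpa only [map_one] using sub_algebraMap_pow_finrank_eq_zero (c := 1) fun μ hμ =>
      hasEigenvalue_translation_eq_one hE htrans hrot hμ
  rw [← coe_restrictTranslation_sub_one_pow_apply htrans _ ⟨f, hf⟩, hnil]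
  rfl

end SphereTransitive

lemma hasSphereTransitiveSymmetries_of_forall_isometry {E K : Type*} [NormedAddCommGroup E]
    [InnerProductSpace ℝ E] [Field K] [TopologicalSpace K] [IsTopologicalRing K]
    {V : Submodule K C(E, K)}
    (hV : ∀ P : E ≃ₗᵢ[ℝ] E, ∀ g ∈ V, g.comp ⟨P, P.continuous⟩ ∈ V) :
    HasSphereTransitiveSymmetries V := fun x y hxy =>
  let P : E ≃ₗᵢ[ℝ] E := (ℝ ∙ (x - y))ᗮ.reflection
  ⟨P.toContinuousLinearEquiv, Submodule.reflection_sub hxy, hV P⟩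

theorem polynomial_of_mem_finiteDimensional_translation_orthogonal_invariant_general
    {ι E : Type*} [Finite ι] [NormedAddCommGroup E] [NormedSpace ℝ E] (b : Module.Basis ι ℝ E)
    (hE : 1 < Module.rank ℝ E) {V : Submodule ℂ C(E, ℂ)} [FiniteDimensional ℂ V]
    (htrans : IsTranslationInvariant V) (hrot : HasSphereTransitiveSymmetries V)
    {f : C(E, ℂ)} (hf : f ∈ V) :
    ∃ P : MvPolynomial ι ℂ, ∀ x, f x = MvPolynomial.eval (algebraMap ℝ ℂ ∘ b.repr x) P :=
  exists_mvPolynomial_of_fwdDiff_iter_eq_zero b f.continuous fun h =>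
    fwdDiff_iter_eq_zero_of_le (Nat.le_succ _) (fwdDiff_iter_finrank_eq_zero hE htrans hrot hf h)

/-- If a continuous `f : ℝ^d → ℂ` (`d ≥ 2`) belongs to a finite-dimensional
subspace of `C(ℝ^d, ℂ)` that is invariant under translations and under
orthogonal transformations, then `f` is an ordinary polynomial. -/
theorem polynomial_of_mem_finiteDimensional_translation_orthogonal_invariant
    (d : ℕ) (hd : 2 ≤ d)
    (f : C(EuclideanSpace ℝ (Fin d), ℂ))
    (V : Submodule ℂ C(EuclideanSpace ℝ (Fin d), ℂ))
    (hVfin : FiniteDimensional ℂ V)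
    (hfV : f ∈ V)
    (htrans : ∀ (h : EuclideanSpace ℝ (Fin d)),
      ∀ g ∈ V, g.comp ⟨fun x => x + h, by continuity⟩ ∈ V)
    (horth : ∀ (P : EuclideanSpace ℝ (Fin d) ≃ₗᵢ[ℝ] EuclideanSpace ℝ (Fin d)),
      ∀ g ∈ V, g.comp ⟨fun x => P x, P.continuous⟩ ∈ V) :
    ∃ p : MvPolynomial (Fin d) ℂ,
      ∀ x : EuclideanSpace ℝ (Fin d),
        f x = MvPolynomial.eval (fun i => (x i : ℂ)) p := by
  have hrank : 1 < Module.rank ℝ (EuclideanSpace ℝ (Fin d)) := by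
    rw [← Module.finrank_eq_rank, finrank_euclideanSpace_fin]
    exact_mod_cast hd
  exact polynomial_of_mem_finiteDimensional_translation_orthogonal_invariant_general
    (EuclideanSpace.basisFun (Fin d) ℝ).toBasis hrank htrans
    (hasSphereTransitiveSymmetries_of_forall_isometry horth) hfV
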